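/- Let x be a rational number whose numerator (in lowest terms) is even and whose denominator is odd, and let k(x) be the least natural number t such that T^[t](x) is an integer. Then the final c-series term, the integer T^[k(x)](x), is even, and the index k(x) is even. -/

import Mathlib

/-- The even-rounded floor `c(x)`: equal to `x` if `x` is an integer; otherwise
`⌊x⌋` if `⌊x⌋` is even and `⌊x⌋ + 1` if `⌊x⌋` is odd. -/
noncomputable def evenFloor (x : ℚ) : ℤ :=
  if x.den = 1 then x.num
  else if Even ⌊x⌋ then ⌊x⌋ else ⌊x⌋ + 1

/-- The step map of the even continued fraction (c-series) expansion:
`T x = (x - c x)⁻¹` if `x` is not an integer, and `T x = 0` otherwise. -/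
noncomputable def stepMap (x : ℚ) : ℚ :=
  if x.den = 1 then 0 else (x - evenFloor x)⁻¹

/-!
Reduce the numerator and the denominator of a rational number modulo 2. Subtracting an even integer
does not change the resulting pair and inversion swaps its entries, so each step of the expansion
at a non-integer swaps them. An integer has odd denominator, so starting from (even, odd) the
expansion can only stop after an even number of swaps, when the pair is again (even, odd).
-/

/-- The reductions modulo 2 of the numerator and the denominator of a rational number in lowest
terms, which together form the invariant that the expansion step permutes. -/
def ratParity (x : ℚ) : ZMod 2 × ZMod 2 :=
  (x.num, x.den)

lemma num_sub_intCast (x : ℚ) (n : ℤ) : (x - n).num = x.num - n * x.den := by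
  have h : ((x - n).num : ℚ) = x.num - n * x.den := by
    rw [← Rat.mul_den_eq_num (x - n), ← Rat.mul_den_eq_num x, Rat.sub_intCast_den, sub_mul]
  exact_mod_cast h

lemma ratParity_sub_intCast_of_even (x : ℚ) {n : ℤ} (hn : Even n) :
    ratParity (x - n) = ratParity x := by
  simp [ratParity, num_sub_intCast, Rat.sub_intCast_den, hn.intCast_zmod_two]

lemma natAbs_num_inv_of_ne_zero {x : ℚ} (hx : x ≠ 0) : x⁻¹.num.natAbs = x.den := by
  simpa using (Rat.den_inv_of_ne_zero (inv_ne_zero hx)).symm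

lemma ratParity_inv_of_ne_zero {x : ℚ} (hx : x ≠ 0) : ratParity x⁻¹ = (ratParity x).swap := by
  simp only [ratParity, Prod.swap_prod_mk]
  rw [← ZMod.natAbs_mod_two x⁻¹.num, natAbs_num_inv_of_ne_zero hx, Rat.den_inv_of_ne_zero hx,
    ZMod.natAbs_mod_two]

lemma den_inv_lt_den_of_abs_lt_one {x : ℚ} (hx : x ≠ 0) (hlt : |x| < 1) : x⁻¹.den < x.den := by
  have hnum : |x|.num < |x|.den := Rat.num_lt_denom_iff.mpr hlt
  rw [Rat.num_abs_eq_abs_num, Rat.den_abs_eq_den, Int.abs_eq_natAbs] at hnum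
  rw [Rat.den_inv_of_ne_zero hx]
  exact_mod_cast hnum

lemma even_evenFloor {x : ℚ} (hx : x.den ≠ 1) : Even (evenFloor x) := by
  rw [evenFloor, if_neg hx]
  split_ifs with hfloor
  · exact hfloor
  · exact (Int.not_even_iff_odd.mp hfloor).add_one

lemma floor_lt_of_den_ne_one {x : ℚ} (hx : x.den ≠ 1) : (⌊x⌋ : ℚ) < x := by
  refine (Int.floor_le x).lt_of_ne fun h => hx ?_
  rw [← h, Rat.den_intCast]

lemma abs_sub_evenFloor_lt_one (x : ℚ) : |x - evenFloor x| < 1 := by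
  unfold evenFloor
  split_ifs with hint hfloor
  · simp [(Rat.den_eq_one_iff x).mp hint]
  · rw [abs_lt]
    constructor <;> linarith [Int.floor_le x, Int.lt_floor_add_one x]
  · rw [abs_lt]
    push_cast
    constructor <;> linarith [floor_lt_of_den_ne_one hint, Int.lt_floor_add_one x]

lemma sub_intCast_ne_zero {x : ℚ} (hx : x.den ≠ 1) (n : ℤ) : x - n ≠ 0 := by
  rw [sub_ne_zero]
  rintro rfl
  exact hx (Rat.den_intCast n)

lemma stepMap_of_den_ne_one {x : ℚ} (hx : x.den ≠ 1) : stepMap x = (x - evenFloor x)⁻¹ :=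
  if_neg hx

lemma den_stepMap_lt {x : ℚ} (hx : x.den ≠ 1) : (stepMap x).den < x.den := by
  rw [stepMap_of_den_ne_one hx, ← Rat.sub_intCast_den x (evenFloor x)]
  exact den_inv_lt_den_of_abs_lt_one (sub_intCast_ne_zero hx _) (abs_sub_evenFloor_lt_one x)

lemma ratParity_stepMap {x : ℚ} (hx : x.den ≠ 1) :
    ratParity (stepMap x) = (ratParity x).swap := by
  rw [stepMap_of_den_ne_one hx, ratParity_inv_of_ne_zero (sub_intCast_ne_zero hx _),
    ratParity_sub_intCast_of_even x (even_evenFloor hx)]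

lemma exists_den_iterate_stepMap_eq_one (x : ℚ) : ∃ t : ℕ, (stepMap^[t] x).den = 1 := by
  by_cases hx : x.den = 1
  · exact ⟨0, hx⟩
  · obtain ⟨t, ht⟩ := exists_den_iterate_stepMap_eq_one (stepMap x)
    exact ⟨t + 1, ht⟩
termination_by x.den
decreasing_by exact den_stepMap_lt hx

lemma ratParity_iterate_stepMap {x : ℚ} {t : ℕ} (ht : ∀ s < t, (stepMap^[s] x).den ≠ 1) :
    ratParity (stepMap^[t] x) = Prod.swap^[t] (ratParity x) := by
  induction t with
  | zero => rfl
  | succ t ih =>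
    rw [Function.iterate_succ_apply', Function.iterate_succ_apply',
      ratParity_stepMap (ht t t.lt_succ_self), ih fun s hs => ht s (hs.trans t.lt_succ_self)]

/-- If `x.num` is even and `x.den` is odd, then with `k x` the least `t` with
`T^[t] x` an integer, the final c-series term (the integer `T^[k x] x`) is even,
and `k x` is even. -/
theorem final_term_even_of_even_odd (x : ℚ) (hnum : Even x.num) (hden : Odd x.den)
    (k : ℕ) (hk : k = sInf {t : ℕ | (stepMap^[t] x).den = 1}) :
    Even (stepMap^[k] x).num ∧ Even k := by
  have hint : (stepMap^[k] x).den = 1 := hk ▸ Nat.sInf_mem (exists_den_iterate_stepMap_eq_one x)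
  have hmin : ∀ s < k, (stepMap^[s] x).den ≠ 1 := fun s hs hs_int =>
    hs.not_ge (hk ▸ Nat.sInf_le hs_int)
  have hparity : ratParity (stepMap^[k] x) = Prod.swap^[k] (ratParity x) :=
    ratParity_iterate_stepMap hmin
  have hswap : Function.Involutive (Prod.swap : ZMod 2 × ZMod 2 → ZMod 2 × ZMod 2) := Prod.swap_swap
  have hk_even : Even k := by
    by_contra hk_odd
    rw [hswap.iterate_odd (Nat.not_even_iff_odd.mp hk_odd)] at hparity
    have hden_num : ((stepMap^[k] x).den : ZMod 2) = x.num := congrArg Prod.snd hparity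
    simp [hint, hnum.intCast_zmod_two] at hden_num
  rw [hswap.iterate_even hk_even] at hparity
  have hnum_num : ((stepMap^[k] x).num : ZMod 2) = x.num := congrArg Prod.fst hparity
  exact ⟨ZMod.intCast_eq_zero_iff_even.mp (hnum_num.trans hnum.intCast_zmod_two), hk_even⟩
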